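/- arXiv:2301.00237 — 2 statements merged into one kernel-verified Lean document; each statement's English description precedes it below -/
import Mathlib

section
/- A finite set Ξ ⊆ ℤ_{≥0}^I is M♮-convex if and only if: (i) whenever ξ, ξ' ∈ Ξ and the coordinate sum of ξ exceeds that of ξ', there exists i with ξ_i > ξ'_i such that ξ − χ_i ∈ Ξ and ξ' + χ_i ∈ Ξ; and (ii) whenever ξ, ξ' ∈ Ξ have equal coordinate sums, for every i with ξ_i > ξ'_i there exists j with ξ_j < ξ'_j such that ξ − χ_i + χ_j ∈ Ξ and ξ' + χ_i − χ_j ∈ Ξ. -/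
/-!
Throughout, a pair of the form `p = q + χᵢ + χₖ - χⱼ` with `j ≠ k` is the key: M♮-convexity and
property (i) alike force a unit to pass from `p` to `q` at `i` or at `k`.

Let `Ξ` be M♮-convex. For (i), induct on the box spanned by `x` and `y`: a swap at `i`, `j` yields
the smaller boxes of `x, y + χᵢ - χⱼ` and of `x - χᵢ + χⱼ, y`, and the units that pass there combine
to one that passes from `x` to `y`. For (ii), if a unit passes from `x` to `y` at `i`, then (i) for
`y` and `x - χᵢ` gives `l` with `x - χᵢ + χₗ, y - χₗ ∈ Ξ`; M♮-convexity of `x` and `y - χₗ` at `i`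
either finishes or gives `j` such that `y` and `y - χₗ + χᵢ - χⱼ` form a key pair.

Conversely, induct on the difference of the coordinate sums, starting from (ii): by (i) a unit
passes at some `k`, and the exchanges at `i` in the two pairs where only one of `x` and `y` has been
moved at `k` combine to an exchange at `i` between `x` and `y`.
-/

/-- Unit vector at coordinate `i`. -/
def unitv {I : Type*} [DecidableEq I] (i : I) : I → ℤ := fun k => if k = i then 1 else 0

/-- `Ξ` is an M♮-convex set of integer vectors. -/
def MNatConvex {I : Type*} [DecidableEq I] (Ξ : Set (I → ℤ)) : Prop :=
  ∀ ξ ∈ Ξ, ∀ ξ' ∈ Ξ, ∀ i : I, ξ' i < ξ i →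
    ((ξ - unitv i ∈ Ξ ∧ ξ' + unitv i ∈ Ξ) ∨
      ∃ j : I, ξ j < ξ' j ∧ ξ - unitv i + unitv j ∈ Ξ ∧ ξ' + unitv i - unitv j ∈ Ξ)

section

variable {I : Type*} [DecidableEq I] {Ξ : Set (I → ℤ)} {x y p q : I → ℤ} {i j k : I}

lemma add_unitv_apply (x : I → ℤ) (i k : I) :
    (x + unitv i) k = x k + if k = i then 1 else 0 := rfl

lemma sub_unitv_apply (x : I → ℤ) (i k : I) :
    (x - unitv i) k = x k - if k = i then 1 else 0 := rfl

lemma ne_and_lt_of_lt_sub_add_unitv (hj : x j < y j) (hk : y k < (x - unitv i + unitv j) k) :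
    k ≠ j ∧ y k < x k := by
  grind [add_unitv_apply, sub_unitv_apply]

lemma ne_and_lt_of_add_sub_unitv_lt (hj : x j < y j) (hk : (y + unitv i - unitv j) k < x k) :
    k ≠ j ∧ y k < x k := by
  grind [add_unitv_apply, sub_unitv_apply]

/-- The M-convex exchange axiom for `x`, `y` at the coordinate `i`: a unit passing from `x` to `y`
at `i` is compensated by one passing back at a coordinate where `x` is smaller. -/
def SwapAt (Ξ : Set (I → ℤ)) (x y : I → ℤ) (i : I) : Prop :=
  ∃ j, x j < y j ∧ x - unitv i + unitv j ∈ Ξ ∧ y + unitv i - unitv j ∈ Ξ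

/-- The M♮-convex exchange axiom for `x`, `y` at the coordinate `i`, so that `MNatConvex Ξ` unfolds
to `ExchangeAt Ξ x y i` for all `x, y ∈ Ξ` and all `i` with `y i < x i`. -/
def ExchangeAt (Ξ : Set (I → ℤ)) (x y : I → ℤ) (i : I) : Prop :=
  (x - unitv i ∈ Ξ ∧ y + unitv i ∈ Ξ) ∨ SwapAt Ξ x y i

lemma MNatConvex.move_or_move (hΞ : MNatConvex Ξ) (hp : p ∈ Ξ) (hq : q ∈ Ξ)
    (hpq : p = q + unitv i + unitv k - unitv j) (hkj : k ≠ j) :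
    (p - unitv i ∈ Ξ ∧ q + unitv i ∈ Ξ) ∨ (p - unitv k ∈ Ξ ∧ q + unitv k ∈ Ξ) := by
  subst hpq
  rcases hΞ _ hp q hq k (by grind [add_unitv_apply, sub_unitv_apply]) with hk | ⟨l, hl, hpl, hql⟩
  · exact .inr hk
  · obtain rfl : l = j := by grind [add_unitv_apply, sub_unitv_apply]
    left
    constructor
    · convert hql using 1; abel
    · convert hpl using 1; abel

variable [Fintype I]

lemma sum_add_unitv (x : I → ℤ) (i : I) : ∑ k, (x + unitv i) k = ∑ k, x k + 1 := by
  simp [unitv, Finset.sum_add_distrib]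

lemma sum_sub_unitv (x : I → ℤ) (i : I) : ∑ k, (x - unitv i) k = ∑ k, x k - 1 := by
  simp [unitv, Finset.sum_sub_distrib]

lemma uIcc_sub_add_unitv_ssubset (hi : y i < x i) (hj : x j < y j) :
    Finset.uIcc (x - unitv i + unitv j) y ⊂ Finset.uIcc x y := by
  have hmem : x - unitv i + unitv j ∈ Finset.uIcc x y := by
    refine Finset.mem_uIcc.2 ⟨fun k => ?_, fun k => ?_⟩ <;>
      grind [add_unitv_apply, sub_unitv_apply, Pi.inf_apply, Pi.sup_apply]
  have hne : x - unitv i + unitv j ≠ x := fun h => by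
    have := congrFun h i
    grind [add_unitv_apply, sub_unitv_apply]
  exact (Finset.uIcc_subset_uIcc_right hmem).ssubset_of_mem_notMem Finset.left_mem_uIcc
    fun h => hne (Finset.eq_of_mem_uIcc_of_mem_uIcc hmem h)

lemma uIcc_add_sub_unitv_ssubset (hi : y i < x i) (hj : x j < y j) :
    Finset.uIcc x (y + unitv i - unitv j) ⊂ Finset.uIcc x y := by
  rw [Finset.uIcc_comm x, Finset.uIcc_comm x, add_sub_right_comm]
  exact uIcc_sub_add_unitv_ssubset hj hi

/-- Property (i): between members of `Ξ` with different coordinate sums, a unit can pass from the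
one with the larger sum to the other. -/
def UnequalSumExchange (Ξ : Set (I → ℤ)) : Prop :=
  ∀ ξ ∈ Ξ, ∀ ξ' ∈ Ξ, (∑ i, ξ' i) < (∑ i, ξ i) →
    ∃ i, ξ' i < ξ i ∧ ξ - unitv i ∈ Ξ ∧ ξ' + unitv i ∈ Ξ

/-- Property (ii): members of `Ξ` with equal coordinate sums satisfy the M-convex exchange axiom. -/
def EqualSumExchange (Ξ : Set (I → ℤ)) : Prop :=
  ∀ ξ ∈ Ξ, ∀ ξ' ∈ Ξ, (∑ i, ξ i) = (∑ i, ξ' i) → ∀ i, ξ' i < ξ i → SwapAt Ξ ξ ξ' i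

namespace UnequalSumExchange

lemma move_or_move (hΞ : UnequalSumExchange Ξ) (hp : p ∈ Ξ) (hq : q ∈ Ξ)
    (hpq : p = q + unitv i + unitv k - unitv j) :
    (p - unitv i ∈ Ξ ∧ q + unitv i ∈ Ξ) ∨ (p - unitv k ∈ Ξ ∧ q + unitv k ∈ Ξ) := by
  subst hpq
  obtain ⟨t, ht, hmove⟩ := hΞ _ hp q hq (by simp only [sum_sub_unitv, sum_add_unitv]; lia)
  obtain rfl | rfl : t = i ∨ t = k := by grind [add_unitv_apply, sub_unitv_apply]
  · exact .inl hmove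
  · exact .inr hmove

lemma move (hΞ : UnequalSumExchange Ξ) (hp : p ∈ Ξ) (hq : q ∈ Ξ)
    (hpq : p = q + unitv i + unitv k) : p - unitv i ∈ Ξ ∧ q + unitv i ∈ Ξ := by
  subst hpq
  obtain ⟨t, ht, hpt, hqt⟩ := hΞ _ hp q hq (by simp only [sum_add_unitv]; lia)
  obtain rfl | rfl : t = i ∨ t = k := by grind [add_unitv_apply]
  · exact ⟨hpt, hqt⟩
  · exact ⟨by rwa [add_sub_right_comm, add_sub_cancel_right], by rwa [add_sub_cancel_right] at hpt⟩

end UnequalSumExchange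

theorem MNatConvex.unequalSumExchange (hΞ : MNatConvex Ξ) : UnequalSumExchange Ξ := by
  intro x hx y hy hsum
  induction hbox : Finset.uIcc x y using Finset.strongInduction generalizing x y with
  | H s ih =>
  subst hbox
  obtain ⟨i, -, hi⟩ := Finset.exists_lt_of_sum_lt hsum
  rcases hΞ x hx y hy i hi with hmove | ⟨j, hj, hxij, hyij⟩
  · exact ⟨i, hi, hmove⟩
  obtain ⟨k, hk, hxk, hyijk⟩ := ih _ (uIcc_add_sub_unitv_ssubset hi hj) x hx _ hyij
    (by rwa [sum_sub_unitv, sum_add_unitv, add_sub_cancel_right]) rfl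
  obtain ⟨l, hl, hxijl, hyl⟩ := ih _ (uIcc_sub_add_unitv_ssubset hi hj) _ hxij y hy
    (by rwa [sum_add_unitv, sum_sub_unitv, sub_add_cancel]) rfl
  obtain ⟨hkj, hk⟩ := ne_and_lt_of_add_sub_unitv_lt hj hk
  obtain ⟨hlj, hl⟩ := ne_and_lt_of_lt_sub_add_unitv hj hl
  rcases hΞ.move_or_move (i := i) hyijk hy (by abel) hkj with ⟨-, hyi⟩ | ⟨-, hyk⟩
  · rcases hΞ.move_or_move (i := i) hx hxijl (by abel) hlj with ⟨hxi, -⟩ | ⟨hxl, -⟩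
    · exact ⟨i, hi, hxi, hyi⟩
    · exact ⟨l, hl, hxl, hyl⟩
  · exact ⟨k, hk, hxk, hyk⟩

theorem MNatConvex.equalSumExchange (hΞ : MNatConvex Ξ) : EqualSumExchange Ξ := by
  intro x hx y hy hsum i hi
  rcases hΞ x hx y hy i hi with ⟨hxi, -⟩ | hswap
  swap
  · exact hswap
  have hΞ' := hΞ.unequalSumExchange
  obtain ⟨l, hl, hyl, hxil⟩ := hΞ' y hy _ hxi (by rw [sum_sub_unitv]; lia)
  have hl : x l < y l := by grind [sub_unitv_apply]
  rcases hΞ x hx _ hyl i (by grind [sub_unitv_apply]) with ⟨-, hyli⟩ | ⟨j, hj, hxij, hylij⟩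
  · exact ⟨l, hl, hxil, by rwa [add_sub_right_comm]⟩
  have hj : x j < y j := by grind [sub_unitv_apply]
  rcases hΞ'.move_or_move (i := l) (k := j) (j := i) hy hylij (by abel) with ⟨-, hyij⟩ | ⟨-, hyil⟩
  · exact ⟨j, hj, hxij, by convert hyij using 1; abel⟩
  · exact ⟨l, hl, hxil, by convert hyil using 1; abel⟩

namespace UnequalSumExchange

lemma exchangeAt_of_move (hΞ : UnequalSumExchange Ξ) (hx : x ∈ Ξ) (hy : y ∈ Ξ) (hk : y k < x k)
    (hxk : ExchangeAt Ξ (x - unitv k) y i) (hyk : ExchangeAt Ξ x (y + unitv k) i) :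
    ExchangeAt Ξ x y i := by
  have hX : x - unitv i ∈ Ξ ∨ SwapAt Ξ x y i := by
    rcases hxk with ⟨hxki, -⟩ | ⟨j, hj, hxkij, hyij⟩
    · exact .inl (hΞ.move (k := k) hx hxki (by abel)).1
    have hj : x j < y j := by grind [sub_unitv_apply]
    rcases hΞ.move_or_move (i := i) (k := k) (j := j) hx hxkij (by abel) with ⟨hxi, -⟩ | ⟨-, hxij⟩
    · exact .inl hxi
    · exact .inr ⟨j, hj, by convert hxij using 1; abel, hyij⟩
  have hY : y + unitv i ∈ Ξ ∨ SwapAt Ξ x y i := by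
    rcases hyk with ⟨-, hyki⟩ | ⟨j, hj, hxij, hykij⟩
    · exact .inl (hΞ.move (k := k) hyki hy (by abel)).2
    have hj : x j < y j := by grind [add_unitv_apply]
    rcases hΞ.move_or_move (i := i) (k := k) (j := j) hykij hy (by abel) with ⟨-, hyi⟩ | ⟨hyij, -⟩
    · exact .inl hyi
    · exact .inr ⟨j, hj, hxij, by convert hyij using 1; abel⟩
  rcases hX with hxi | hswap
  · exact hY.imp_left (And.intro hxi)
  · exact .inr hswap

lemma swapAt_of_move (hΞ : UnequalSumExchange Ξ) (hx : x ∈ Ξ) (hy : y ∈ Ξ) (hk : x k < y k)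
    (hxk : SwapAt Ξ (x + unitv k) y i) (hyk : SwapAt Ξ x (y - unitv k) i) :
    SwapAt Ξ x y i := by
  have hX : x - unitv i + unitv k ∈ Ξ ∨ SwapAt Ξ x y i := by
    obtain ⟨j, hj, hxkij, hyij⟩ := hxk
    have hj : x j < y j := by grind [add_unitv_apply]
    rcases hΞ.move_or_move (i := k) (k := j) (j := i) hxkij hx (by abel) with ⟨hxij, -⟩ | ⟨hxik, -⟩
    · exact .inr ⟨j, hj, by convert hxij using 1; abel, hyij⟩
    · exact .inl (by convert hxik using 1; abel)
  have hY : y + unitv i - unitv k ∈ Ξ ∨ SwapAt Ξ x y i := by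
    obtain ⟨j, hj, hxij, hykij⟩ := hyk
    have hj : x j < y j := by grind [sub_unitv_apply]
    rcases hΞ.move_or_move (i := k) (k := j) (j := i) hy hykij (by abel) with ⟨-, hyij⟩ | ⟨-, hyik⟩
    · exact .inr ⟨j, hj, hxij, by convert hyij using 1; abel⟩
    · exact .inl (by convert hyik using 1; abel)
  rcases hX with hxik | hswap
  · exact hY.elim (fun hyik => ⟨k, hk, hxik, hyik⟩) id
  · exact hswap

lemma exchangeAt_of_sum_eq_add (hΞ : UnequalSumExchange Ξ) (hΞ' : EqualSumExchange Ξ) (n : ℕ)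
    (hx : x ∈ Ξ) (hy : y ∈ Ξ) (hsum : ∑ l, x l = ∑ l, y l + n) (hi : y i < x i) :
    ExchangeAt Ξ x y i := by
  induction n generalizing x y with
  | zero => exact .inr (hΞ' x hx y hy (by simpa using hsum) i hi)
  | succ n ih =>
    obtain ⟨k, hk, hxk, hyk⟩ := hΞ x hx y hy (by lia)
    rcases eq_or_ne i k with rfl | hik
    · exact .inl ⟨hxk, hyk⟩
    · exact hΞ.exchangeAt_of_move hx hy hk
        (ih hxk hy (by rw [sum_sub_unitv]; lia) (by rwa [sub_unitv_apply, if_neg hik, sub_zero]))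
        (ih hx hyk (by rw [sum_add_unitv]; lia) (by rwa [add_unitv_apply, if_neg hik, add_zero]))

lemma swapAt_of_add_eq_sum (hΞ : UnequalSumExchange Ξ) (hΞ' : EqualSumExchange Ξ) (n : ℕ)
    (hx : x ∈ Ξ) (hy : y ∈ Ξ) (hsum : ∑ l, x l + n = ∑ l, y l) (hi : y i < x i) :
    SwapAt Ξ x y i := by
  induction n generalizing x y with
  | zero => exact hΞ' x hx y hy (by simpa using hsum) i hi
  | succ n ih =>
    obtain ⟨k, hk, hyk, hxk⟩ := hΞ y hy x hx (by lia)
    have hik : i ≠ k := by rintro rfl; exact hi.not_gt hk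
    exact hΞ.swapAt_of_move hx hy hk
      (ih hxk hy (by rw [sum_add_unitv]; lia) (by rwa [add_unitv_apply, if_neg hik, add_zero]))
      (ih hx hyk (by rw [sum_sub_unitv]; lia) (by rwa [sub_unitv_apply, if_neg hik, sub_zero]))

end UnequalSumExchange

theorem mNatConvex_of_unequalSumExchange_of_equalSumExchange (hΞ : UnequalSumExchange Ξ)
    (hΞ' : EqualSumExchange Ξ) : MNatConvex Ξ := by
  intro x hx y hy i hi
  rcases le_total (∑ l, y l) (∑ l, x l) with hle | hle
  · obtain ⟨n, hn⟩ := Int.le.dest hle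
    exact hΞ.exchangeAt_of_sum_eq_add hΞ' n hx hy hn.symm hi
  · obtain ⟨n, hn⟩ := Int.le.dest hle
    exact .inr (hΞ.swapAt_of_add_eq_sum hΞ' n hx hy hn hi)

theorem MNatConvex_iff_general (Ξ : Set (I → ℤ)) :
    MNatConvex Ξ ↔ UnequalSumExchange Ξ ∧ EqualSumExchange Ξ :=
  ⟨fun hΞ => ⟨hΞ.unequalSumExchange, hΞ.equalSumExchange⟩,
    fun hΞ => mNatConvex_of_unequalSumExchange_of_equalSumExchange hΞ.1 hΞ.2⟩

end

/-- a finite set of nonnegative integer vectors is M♮-convex iff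
(i) between vectors of different coordinate sums one can move by a single unit step in
both directions, and (ii) between vectors of equal coordinate sums every decreasing
coordinate admits a compensating exchange coordinate. -/
theorem MNatConvex_iff {I : Type*} [Fintype I] [DecidableEq I]
    (Ξ : Set (I → ℤ)) (hfin : Ξ.Finite) (hpos : ∀ ξ ∈ Ξ, ∀ i, 0 ≤ ξ i) :
    MNatConvex Ξ ↔
      ((∀ ξ ∈ Ξ, ∀ ξ' ∈ Ξ, (∑ i, ξ' i) < (∑ i, ξ i) →
          ∃ i : I, ξ' i < ξ i ∧ ξ - unitv i ∈ Ξ ∧ ξ' + unitv i ∈ Ξ) ∧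
        (∀ ξ ∈ Ξ, ∀ ξ' ∈ Ξ, (∑ i, ξ i) = (∑ i, ξ' i) →
          ∀ i : I, ξ' i < ξ i →
            ∃ j : I, ξ j < ξ' j ∧ ξ - unitv i + unitv j ∈ Ξ ∧
              ξ' + unitv i - unitv j ∈ Ξ)) :=
  MNatConvex_iff_general Ξ
end

section
/- If the greedy rule on a nonempty downward-closed collection F of subsets of a finite set X satisfies path independence for every injective weight function, then (X, F) is a matroid. Conversely, if (X, F) is a matroid then for all weight functions the greedy rule satisfies path independence and the law of aggregate demand. -/
open Finset

/-- `F` is the collection of independent sets of a matroid on the finite ground set `α`. -/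
def IsMatroidIndep {α : Type*} [DecidableEq α] [Fintype α] (F : Set (Finset α)) : Prop :=
  ∅ ∈ F ∧ (∀ Y ∈ F, ∀ Z ⊆ Y, Z ∈ F) ∧
    ∀ Y₁ ∈ F, ∀ Y₂ ∈ F, Y₁.card < Y₂.card → ∃ x ∈ Y₂ \ Y₁, insert x Y₁ ∈ F

open scoped Classical in
/-- One pass of the greedy rule with fuel: starting from the chosen set `S`, repeatedly
add the highest-weight element `x` of `A` not yet chosen such that the chosen set
together with `x` is contained in some member of `F`. -/
noncomputable def greedyAux {α : Type*} [DecidableEq α] (F : Set (Finset α)) (w : α → ℝ) :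
    ℕ → Finset α → Finset α → Finset α
  | 0, _, S => S
  | n + 1, A, S =>
      let cands := (A \ S).filter fun x => ∃ Y ∈ F, insert x S ⊆ Y
      if h : cands.Nonempty then
        greedyAux F w n A (insert (cands.exists_max_image w h).choose S)
      else S

/-- The greedy rule: from the available set `A`, iteratively add the highest-weight
element that keeps the chosen set inside some member of `F`. -/
noncomputable def greedy {α : Type*} [DecidableEq α] (F : Set (Finset α)) (w : α → ℝ)
    (A : Finset α) : Finset α :=
  greedyAux F w A.card A ∅

/-- Path independence of a choice rule. -/
def PathIndependent {α : Type*} [DecidableEq α] (C : Finset α → Finset α) : Prop :=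
  ∀ A B : Finset α, C (A ∪ B) = C (C A ∪ B)

/-- The law of aggregate demand. -/
def LawOfAggregateDemand {α : Type*} (C : Finset α → Finset α) : Prop :=
  ∀ A B : Finset α, A ⊆ B → (C A).card ≤ (C B).card

/-!
A greedy choice from `A` is a feasible set such that every rejected element is blocked by the chosen
elements of at least its weight; for injective weights this determines it.

If augmentation fails, then a smallest failure involves `D`, `a` and `b ≠ c` with `D ∪ {a}` and
`D ∪ {b, c}` feasible but neither `D ∪ {a, b}` nor `D ∪ {a, c}` feasible. Weigh the elements of `D`
above `b`, then `b`, `a`, `c` in this order. The greedy rule rejects `c` from `D ∪ {a, c}` but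
accepts it from `D ∪ {a, b, c}`, because `b` now displaces `a`; this violates path independence.

Conversely, in a matroid and for every threshold, the elements of the greedy choice from `A` above
the threshold span all elements of `A` above it. An element rejected from `A` is spanned by heavier
elements of `A`, hence by heavier chosen elements of any larger set, and is rejected from there too.
So `C (A ∪ B) ⊆ C A ∪ B`, and a greedy choice is still one after removing rejected elements from the
available set.
-/

section AugmentationProperty

variable {α : Type*} [DecidableEq α]

/-- The augmentation (exchange) axiom (I3) of a matroid, for a family of finite subsets of a
possibly infinite type. -/
def AugmentationProperty (F : Set (Finset α)) : Prop :=
  ∀ I ∈ F, ∀ K ∈ F, #I < #K → ∃ x ∈ K \ I, insert x I ∈ F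

/-- The smallest instances of the augmentation axiom: `D ∪ {a}` can be augmented from
`D ∪ {b, c}`. -/
def LocalAugmentationProperty (F : Set (Finset α)) : Prop :=
  ∀ ⦃D : Finset α⦄ ⦃a b c : α⦄, b ∉ D → c ∉ D → b ≠ c →
    insert a D ∈ F → insert b (insert c D) ∈ F →
      insert b (insert a D) ∈ F ∨ insert c (insert a D) ∈ F

theorem LocalAugmentationProperty.augmentationProperty {F : Set (Finset α)} (hF : IsLowerSet F)
    (hloc : LocalAugmentationProperty F) : AugmentationProperty F := by
  intro I hI K hK hcard
  induction hn : #(I \ K) using Nat.strong_induction_on generalizing I with | _ n ih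
  obtain hIK | ⟨a, ha⟩ := (I \ K).eq_empty_or_nonempty
  · obtain ⟨x, hxK, hxI⟩ := exists_mem_notMem_of_card_lt_card hcard
    exact ⟨x, mem_sdiff.2 ⟨hxK, hxI⟩,
      hF (insert_subset hxK (sdiff_eq_empty_iff_subset.1 hIK)) hK⟩
  obtain ⟨haI, haK⟩ := mem_sdiff.1 ha
  obtain ⟨D, haD, rfl⟩ : ∃ D, a ∉ D ∧ insert a D = I :=
    ⟨I.erase a, notMem_erase a I, insert_erase haI⟩
  have hD : D ∈ F := hF (subset_insert a D) hI
  rw [card_insert_of_notMem haD] at hcard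
  have hlt : #(D \ K) < n := by
    rw [← hn, insert_sdiff_of_notMem _ haK, card_insert_of_notMem (by simp [haD])]
    exact Nat.lt_succ_self _
  obtain ⟨b, hb, hbD⟩ := ih _ hlt D hD (by lia) rfl
  obtain ⟨hbK, hb⟩ := mem_sdiff.1 hb
  obtain ⟨c, hc, hcbD⟩ := ih _ hlt (insert b D) hbD (by rwa [card_insert_of_notMem hb])
    (by rw [insert_sdiff_of_mem _ hbK])
  obtain ⟨hcK, hc⟩ := mem_sdiff.1 hc
  obtain ⟨hcb, hcD⟩ : c ≠ b ∧ c ∉ D := by simpa using hc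
  have hba : b ≠ a := ne_of_mem_of_not_mem hbK haK
  have hca : c ≠ a := ne_of_mem_of_not_mem hcK haK
  obtain h | h := hloc hb hcD hcb.symm hI (by rwa [insert_comm])
  · exact ⟨b, by simp [hbK, hba, hb], h⟩
  · exact ⟨c, by simp [hcK, hca, hcD], h⟩

theorem AugmentationProperty.exists_matroid {J : LowerSet (Finset α)}
    (hJ : AugmentationProperty (J : Set (Finset α))) (h_empty : ∅ ∈ J) :
    ∃ M : Matroid α, M.E = Set.univ ∧ ∀ I : Finset α, M.Indep I ↔ I ∈ J := by
  have haug : ∀ ⦃I K⦄, I ∈ J → K ∈ J → #I < #K → ∃ x ∈ K, x ∉ I ∧ insert x I ∈ J := by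
    intro I K hI hK hcard
    obtain ⟨x, hx, hxI⟩ := hJ I hI K hK hcard
    exact ⟨x, (mem_sdiff.1 hx).1, (mem_sdiff.1 hx).2, hxI⟩
  let N := IndepMatroid.ofFinset Set.univ (· ∈ J) h_empty (fun _ _ hK hIK => J.lower hIK hK) haug
    fun _ _ => Set.subset_univ _
  have hN (I : Finset α) : N.Indep I ↔ I ∈ J := IndepMatroid.ofFinset_indep ..
  exact ⟨N.matroid, rfl, hN⟩

end AugmentationProperty

/-- `G` is a greedy choice from `A` for the feasible sets `J`: every rejected element is blocked by
the chosen elements of at least its weight. Unlike `greedy`, this does not mention the order in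
which elements are processed; ties are allowed. -/
structure IsGreedyChoice {α β : Type*} [DecidableEq α] [LinearOrder β] (J : LowerSet (Finset α))
    (w : α → β) (A G : Finset α) : Prop where
  subset : G ⊆ A
  mem : G ∈ J
  insert_notMem : ∀ x ∈ A, x ∉ G → insert x {y ∈ G | w x ≤ w y} ∉ J

namespace IsGreedyChoice

variable {α β : Type*} [DecidableEq α] [LinearOrder β] {J : LowerSet (Finset α)} {w : α → β}
  {A B G H : Finset α}

theorem of_subset (hG : IsGreedyChoice J w B G) (hAB : A ⊆ B) (hGA : G ⊆ A) :
    IsGreedyChoice J w A G :=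
  ⟨hGA, hG.mem, fun x hx => hG.insert_notMem x (hAB hx)⟩

theorem insert_self {K : Finset α} {x : α} (hG : G ∈ J) (hKG : K ⊆ G)
    (hxK : ∀ y ∈ K, w x ≤ w y) (hx : insert x K ∉ J) : IsGreedyChoice J w (insert x G) G where
  subset := subset_insert x G
  mem := hG
  insert_notMem z hz hzG h := by
    obtain rfl := eq_of_mem_insert_of_notMem hz hzG
    exact hx (J.lower (insert_subset_insert _ fun y hy => mem_filter.2 ⟨hKG hy, hxK y hy⟩) h)

theorem exists_lt_of_mem_of_notMem (hw : Function.Injective w) (hG : IsGreedyChoice J w A G)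
    (hH : IsGreedyChoice J w A H) {x : α} (hxG : x ∈ G) (hxH : x ∉ H) :
    ∃ y ∈ H, y ∉ G ∧ w x < w y := by
  by_contra! h
  refine hH.insert_notMem x (hG.subset hxG) hxH (J.lower ?_ hG.mem)
  refine insert_subset hxG fun y hy => ?_
  obtain ⟨hyH, hxy⟩ := mem_filter.1 hy
  by_contra hyG
  exact hxH (hw (hxy.antisymm (h y hyH hyG)) ▸ hyH)

theorem unique (hw : Function.Injective w) (hG : IsGreedyChoice J w A G)
    (hH : IsGreedyChoice J w A H) : G = H := by
  by_contra hne
  obtain ⟨x, hx, hmax⟩ := exists_max_image (symmDiff G H) w (symmDiff_nonempty.2 hne)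
  obtain ⟨hxG, hxH⟩ | ⟨hxH, hxG⟩ := mem_symmDiff.1 hx
  · obtain ⟨y, hyH, hyG, hxy⟩ := exists_lt_of_mem_of_notMem hw hG hH hxG hxH
    exact hxy.not_ge (hmax y (mem_symmDiff.2 (.inr ⟨hyH, hyG⟩)))
  · obtain ⟨y, hyG, hyH, hxy⟩ := exists_lt_of_mem_of_notMem hw hH hG hxH hxG
    exact hxy.not_ge (hmax y (mem_symmDiff.2 (.inl ⟨hyG, hyH⟩)))

theorem card_le_card (hJ : AugmentationProperty (J : Set (Finset α)))
    (hG : IsGreedyChoice J w A G) (hH : IsGreedyChoice J w B H) (hAB : A ⊆ B) : #G ≤ #H := by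
  by_contra! hlt
  obtain ⟨x, hx, hxH⟩ := hJ H hH.mem G hG.mem hlt
  obtain ⟨hxG, hx⟩ := mem_sdiff.1 hx
  exact hH.insert_notMem x (hAB (hG.subset hxG)) hx
    (J.lower (insert_subset_insert x (filter_subset _ H)) hxH)

section Matroid

variable {M : Matroid α}

theorem mem_closure (hME : M.E = Set.univ) (hMJ : ∀ I : Finset α, M.Indep I ↔ I ∈ J)
    (hG : IsGreedyChoice J w A G) {x : α} (hxA : x ∈ A) :
    x ∈ M.closure {y | y ∈ G ∧ w x ≤ w y} := by
  by_cases hxG : x ∈ G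
  · exact M.mem_closure_of_mem' ⟨hxG, le_rfl⟩ (hME ▸ Set.mem_univ x)
  have hI : M.Indep ({y ∈ G | w x ≤ w y} : Finset α) :=
    (hMJ _).2 (J.lower (filter_subset _ G) hG.mem)
  have hx : ¬ M.Indep (insert x {y ∈ G | w x ≤ w y} : Finset α) :=
    mt (hMJ _).1 (hG.insert_notMem x hxA hxG)
  rw [coe_insert] at hx
  simpa using hI.mem_closure_iff'.2 ⟨hME ▸ Set.mem_univ x, fun h => (hx h).elim⟩

theorem subset_closure_lt (hME : M.E = Set.univ) (hMJ : ∀ I : Finset α, M.Indep I ↔ I ∈ J)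
    (hG : IsGreedyChoice J w A G) (t : β) :
    {y | y ∈ A ∧ t < w y} ⊆ M.closure {y | y ∈ G ∧ t < w y} := by
  rintro y ⟨hyA, hty⟩
  refine M.closure_subset_closure ?_ (hG.mem_closure hME hMJ hyA)
  exact fun z ⟨hzG, hyz⟩ => ⟨hzG, hty.trans_le hyz⟩

end Matroid

theorem mem_of_mem_of_subset (hJ : AugmentationProperty (J : Set (Finset α)))
    (hw : Function.Injective w) (hH : IsGreedyChoice J w A H) (hG : IsGreedyChoice J w B G)
    (hAB : A ⊆ B) {x : α} (hxA : x ∈ A) (hxG : x ∈ G) : x ∈ H := by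
  by_contra hxH
  obtain ⟨M, hME, hMJ⟩ := hJ.exists_matroid (J.lower (empty_subset G) hG.mem)
  have hheavier : {y | y ∈ H ∧ w x ≤ w y} ⊆ {y | y ∈ B ∧ w x < w y} := fun y ⟨hyH, hxy⟩ =>
    ⟨hAB (hH.subset hyH), hxy.lt_of_ne fun h => hxH (hw h ▸ hyH)⟩
  have hspan : x ∈ M.closure {y | y ∈ G ∧ w x < w y} :=
    M.closure_subset_closure_of_subset_closure
      (hheavier.trans (hG.subset_closure_lt hME hMJ (w x))) (hH.mem_closure hME hMJ hxA)
  refine ((hMJ G).2 hG.mem).notMem_closure_sdiff_of_mem (mem_coe.2 hxG)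
    (M.closure_subset_closure ?_ hspan)
  exact fun y ⟨hyG, hxy⟩ => ⟨hyG, fun h => hxy.ne' (congrArg w h)⟩

end IsGreedyChoice

/-- `S` is an intermediate state of the greedy rule on `A`: an element not yet chosen is either
already blocked by the chosen elements of at least its weight, or no chosen element is lighter. -/
structure IsGreedyStage {α β : Type*} [DecidableEq α] [LinearOrder β] (J : LowerSet (Finset α))
    (w : α → β) (A S : Finset α) : Prop where
  subset : S ⊆ A
  mem : S ∈ J
  le_of_insert_mem : ∀ x ∈ A, x ∉ S → insert x {y ∈ S | w x ≤ w y} ∈ J → ∀ y ∈ S, w x ≤ w y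

namespace IsGreedyStage

variable {α β : Type*} [DecidableEq α] [LinearOrder β] {J : LowerSet (Finset α)} {w : α → β}
  {A S : Finset α}

theorem empty (h_empty : ∅ ∈ J) : IsGreedyStage J w A ∅ :=
  ⟨empty_subset A, h_empty, by simp⟩

theorem insert_mem (hS : IsGreedyStage J w A S) {x : α} (hxA : x ∈ A) (hxS : x ∉ S)
    (hx : insert x {y ∈ S | w x ≤ w y} ∈ J) : insert x S ∈ J := by
  rwa [filter_true_of_mem (hS.le_of_insert_mem x hxA hxS hx)] at hx

theorem insert_of_forall_le (hS : IsGreedyStage J w A S) {m : α} (hmA : m ∈ A) (hm : insert m S ∈ J)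
    (hmax : ∀ x ∈ A, x ∉ S → insert x S ∈ J → w x ≤ w m) :
    IsGreedyStage J w A (insert m S) where
  subset := insert_subset hmA hS.subset
  mem := hm
  le_of_insert_mem x hxA hx h := by
    have hxS : x ∉ S := fun h => hx (mem_insert_of_mem h)
    have hblock : insert x {y ∈ S | w x ≤ w y} ∈ J :=
      J.lower (insert_subset_insert x (filter_subset_filter _ (subset_insert m S))) h
    exact forall_mem_insert _ _ _ |>.2
      ⟨hmax x hxA hxS (hS.insert_mem hxA hxS hblock), hS.le_of_insert_mem x hxA hxS hblock⟩

theorem isGreedyChoice (hS : IsGreedyStage J w A S) (hmax : ∀ x ∈ A, x ∉ S → insert x S ∉ J) :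
    IsGreedyChoice J w A S :=
  ⟨hS.subset, hS.mem, fun x hxA hxS hx => hmax x hxA hxS (hS.insert_mem hxA hxS hx)⟩

end IsGreedyStage

section Greedy

variable {α : Type*} [DecidableEq α] {F : Set (Finset α)} {w : α → ℝ} {A S : Finset α}

theorem IsGreedyStage.isGreedyChoice_greedyAux (hS : IsGreedyStage (lowerClosure F) w A S) {n : ℕ}
    (hn : #(A \ S) ≤ n) : IsGreedyChoice (lowerClosure F) w A (greedyAux F w n A S) := by
  classical
  induction n generalizing S with
  | zero =>
    have hAS : A ⊆ S := sdiff_eq_empty_iff_subset.1 (card_eq_zero.1 (Nat.le_zero.1 hn))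
    exact hS.isGreedyChoice fun x hxA hxS => (hxS (hAS hxA)).elim
  | succ n ih =>
    rw [greedyAux]
    split_ifs with h
    · generalize_proofs hex
      obtain ⟨hm, hmax⟩ := hex.choose_spec
      generalize hex.choose = m at hm hmax ⊢
      obtain ⟨hmAS, hmF⟩ := mem_filter.1 hm
      refine ih (hS.insert_of_forall_le (mem_sdiff.1 hmAS).1 hmF fun x hxA hxS hx =>
        hmax x (mem_filter.2 ⟨mem_sdiff.2 ⟨hxA, hxS⟩, hx⟩)) ?_
      rw [sdiff_insert, card_erase_of_mem hmAS]
      lia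
    · exact hS.isGreedyChoice fun x hxA hxS hx =>
        h ⟨x, mem_filter.2 ⟨mem_sdiff.2 ⟨hxA, hxS⟩, hx⟩⟩

theorem isGreedyChoice_greedy (hF : F.Nonempty) (w : α → ℝ) (A : Finset α) :
    IsGreedyChoice (lowerClosure F) w A (greedy F w A) :=
  (IsGreedyStage.empty (hF.imp fun Y hY => ⟨hY, empty_subset Y⟩)).isGreedyChoice_greedyAux
    (card_le_card sdiff_subset)

theorem lawOfAggregateDemand_greedy (hF : F.Nonempty)
    (hJ : AugmentationProperty (lowerClosure F : Set (Finset α))) (w : α → ℝ) :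
    LawOfAggregateDemand (greedy F w) := fun A B hAB =>
  (isGreedyChoice_greedy hF w A).card_le_card hJ (isGreedyChoice_greedy hF w B) hAB

theorem pathIndependent_greedy (hF : F.Nonempty)
    (hJ : AugmentationProperty (lowerClosure F : Set (Finset α))) (hw : Function.Injective w) :
    PathIndependent (greedy F w) := by
  intro A B
  have hA := isGreedyChoice_greedy hF w A
  have hAB := isGreedyChoice_greedy hF w (A ∪ B)
  have hsub : greedy F w (A ∪ B) ⊆ greedy F w A ∪ B := by
    intro x hx
    obtain hxA | hxB := mem_union.1 (hAB.subset hx)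
    · exact mem_union_left B (hA.mem_of_mem_of_subset hJ hw hAB subset_union_left hxA hx)
    · exact mem_union_right _ hxB
  exact (hAB.of_subset (union_subset_union_left hA.subset) hsub).unique hw
    (isGreedyChoice_greedy hF w _)

end Greedy

section Weights

variable {α : Type*}

theorem exists_injective_lt_of_ne {w : α → ℝ} (hw : Function.Injective w) (a : α) :
    ∃ v : α → ℝ, Function.Injective v ∧ (∀ x ≠ a, v a < v x) ∧
      ∀ x ≠ a, ∀ y ≠ a, w x < w y → v x < v y := by
  classical
  refine ⟨Function.update (Real.exp ∘ w) a 0, fun x y hxy => ?_, fun x hx => ?_,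
    fun x hx y hy hxy => ?_⟩
  · by_cases hx : x = a <;> by_cases hy : y = a <;>
      simp_all [Real.exp_ne_zero, (Real.exp_ne_zero _).symm, hw.eq_iff]
  · simpa [hx] using Real.exp_pos (w x)
  · simpa [hx, hy] using hxy

theorem exists_injective_pairwise_lt (e : α ↪ ℝ) {l : List α} (hl : l.Nodup) :
    ∃ w : α → ℝ, Function.Injective w ∧ l.Pairwise (w · < w ·) ∧ ∀ x ∈ l, ∀ y ∉ l, w x < w y := by
  induction l with
  | nil => exact ⟨e, e.injective, by simp⟩
  | cons a l ih =>
    obtain ⟨hal, hl⟩ := List.nodup_cons.1 hl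
    obtain ⟨w, hw, hsorted, hlow⟩ := ih hl
    obtain ⟨v, hv, hav, hwv⟩ := exists_injective_lt_of_ne hw a
    have hne : ∀ x ∈ l, x ≠ a := fun x hx => ne_of_mem_of_not_mem hx hal
    refine ⟨v, hv, List.pairwise_cons.2 ⟨fun x hx => hav x (hne x hx), ?_⟩, fun x hx y hy => ?_⟩
    · exact hsorted.imp_of_mem fun hx hy => hwv _ (hne _ hx) _ (hne _ hy)
    · obtain ⟨hya, hyl⟩ := not_or.1 (mt List.mem_cons.2 hy)
      obtain rfl | hxl := List.mem_cons.1 hx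
      · exact hav y hya
      · exact hwv x (hne x hxl) y hya (hlow x hxl y hyl)

end Weights

theorem localAugmentationProperty_of_pathIndependent {α : Type*} [DecidableEq α]
    {F : Set (Finset α)} (e : α ↪ ℝ)
    (hP : ∀ w : α → ℝ, Function.Injective w → PathIndependent (greedy F w)) :
    LocalAugmentationProperty (lowerClosure F : Set (Finset α)) := by
  intro D a b c hb hc hbc haD hbcD
  by_contra! ⟨hbaD, hcaD⟩
  have hF : F.Nonempty := haD.imp fun _ => And.left
  have hbD : insert b D ∈ lowerClosure F :=
    (lowerClosure F).lower (insert_subset_insert b (subset_insert c D)) hbcD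
  have ha : a ∉ D := fun h => hbaD (by rwa [insert_eq_self.2 h])
  have hab : a ≠ b := by rintro rfl; exact hbaD (by rwa [insert_idem])
  have hac : a ≠ c := by rintro rfl; exact hcaD (by rwa [insert_idem])
  obtain ⟨w, hw, hsorted, hlow⟩ := exists_injective_pairwise_lt e
    (l := [c, a, b]) (by simp [hab, hac.symm, hbc.symm])
  obtain ⟨⟨hca, _⟩, hab⟩ : (w c < w a ∧ w c < w b) ∧ w a < w b := by simpa using hsorted
  have hD : ∀ y ∈ D, w c < w y ∧ w a < w y := fun y hy => by
    have hy' : y ∉ [c, a, b] := by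
      simpa using ⟨ne_of_mem_of_not_mem hy hc, ne_of_mem_of_not_mem hy ha,
        ne_of_mem_of_not_mem hy hb⟩
    exact ⟨hlow c (by simp) y hy', hlow a (by simp) y hy'⟩
  have hwithout : greedy F w (insert c (insert a D)) = insert a D :=
    (isGreedyChoice_greedy hF w _).unique hw <| .insert_self haD subset_rfl
      ((forall_mem_insert _ _ _).2 ⟨hca.le, fun y hy => (hD y hy).1.le⟩) hcaD
  have hwith : greedy F w (insert c (insert a D) ∪ {b}) = insert b (insert c D) := by
    rw [show insert c (insert a D) ∪ {b} = insert a (insert b (insert c D)) by grind]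
    exact (isGreedyChoice_greedy hF w _).unique hw <|
      .insert_self hbcD (insert_subset_insert b (subset_insert c D))
        ((forall_mem_insert _ _ _).2 ⟨hab.le, fun y hy => (hD y hy).2.le⟩) (by rwa [insert_comm])
  have hsub : insert b (insert c D) ⊆ insert a D ∪ {b} := by
    rw [← hwith, hP w hw, hwithout]
    exact (isGreedyChoice_greedy hF w _).subset
  have hcab : c ∈ insert a D ∪ {b} := hsub (by simp)
  simp [hac.symm, hc, hbc.symm] at hcab

theorem greedy_pathIndependent_iff_matroid_general {α : Type*} [DecidableEq α]
    {F : Set (Finset α)} (hne : F.Nonempty) (e : α ↪ ℝ) :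
    ((∀ w : α → ℝ, Function.Injective w → PathIndependent (greedy F w)) ↔
      AugmentationProperty (lowerClosure F : Set (Finset α))) ∧
    (AugmentationProperty (lowerClosure F : Set (Finset α)) →
      ∀ w : α → ℝ, LawOfAggregateDemand (greedy F w)) :=
  ⟨⟨fun hP => (localAugmentationProperty_of_pathIndependent e hP).augmentationProperty
      (lowerClosure F).lower,
    fun hJ _ hw => pathIndependent_greedy hne hJ hw⟩, lawOfAggregateDemand_greedy hne⟩

/-- if the greedy rule on a nonempty downward-closed collection `F`
satisfies path independence for every injective weight function, then `(α, F)` is a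
matroid; conversely, if `(α, F)` is a matroid then for all (injective) weight functions
the greedy rule satisfies path independence and the law of aggregate demand. -/
theorem greedy_pathIndependent_iff_matroid {α : Type*} [DecidableEq α] [Fintype α]
    (F : Set (Finset α)) (hne : F.Nonempty) :
    ((∀ Y ∈ F, ∀ Z ⊆ Y, Z ∈ F) →
      (∀ w : α → ℝ, Function.Injective w → PathIndependent (greedy F w)) →
        IsMatroidIndep F) ∧
    (IsMatroidIndep F →
      ∀ w : α → ℝ, Function.Injective w →
        PathIndependent (greedy F w) ∧ LawOfAggregateDemand (greedy F w)) := by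
  have general (hF : ∀ Y ∈ F, ∀ Z ⊆ Y, Z ∈ F) :=
    IsLowerSet.lowerClosure (fun Y Z hZY hY => hF Y hY Z hZY) ▸
      greedy_pathIndependent_iff_matroid_general hne
        ((Fintype.equivFin α).toEmbedding.trans (Fin.valEmbedding.trans Nat.castEmbedding))
  exact ⟨fun hF hP => ⟨hF _ hne.some_mem ∅ (empty_subset _), hF, (general hF).1.1 hP⟩,
    fun ⟨_, hF, hJ⟩ w hw => ⟨(general hF).1.2 hJ w hw, (general hF).2 hJ w⟩⟩
end
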